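/- If a quantum learning algorithm N is γ-stable, i.e., the mutual information I[S𝔗e; WB'] ≤ γ with respect to its output state, and its loss operators satisfy the classical-quantum α-sub-Gaussian property with respect to the product of the marginals, then the expected generalization error satisfies gen(N) ≤ √(2α² γ). -/

import Mathlib

open Matrix
open scoped ComplexOrder

variable {d : Type*} [Fintype d] [DecidableEq d]

/-- Apply a real function to a Hermitian matrix via the spectral theorem
(junk value `0` for non-Hermitian matrices). -/
noncomputable def matFun (f : ℝ → ℝ) (A : Matrix d d ℂ) : Matrix d d ℂ :=
  if hA : A.IsHermitian then
    (hA.eigenvectorUnitary : Matrix d d ℂ) *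
      Matrix.diagonal (fun i => (f (hA.eigenvalues i) : ℂ)) *
      (star (hA.eigenvectorUnitary : Matrix d d ℂ))
  else 0

/-- Matrix logarithm (via spectral calculus, with `Real.log 0 = 0` on the kernel). -/
noncomputable def mlog (A : Matrix d d ℂ) : Matrix d d ℂ := matFun Real.log A

/-- Quantum (Umegaki) relative entropy `D(ρ‖σ) = Tr[ρ(log ρ − log σ)]`. -/
noncomputable def qRelEnt (ρ σ : Matrix d d ℂ) : ℝ :=
  (Matrix.trace (ρ * (mlog ρ - mlog σ))).re

/-- `ρ` is a density operator. -/
def IsDensity (ρ : Matrix d d ℂ) : Prop := ρ.PosSemidef ∧ Matrix.trace ρ = 1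

/-- `supp ρ ⊆ supp σ`, stated as `ker σ ⊆ ker ρ`. -/
def SuppLE (ρ σ : Matrix d d ℂ) : Prop := ∀ v : d → ℂ, σ.mulVec v = 0 → ρ.mulVec v = 0

/-- Matrix exponential via spectral calculus. -/
noncomputable def mexp (A : Matrix d d ℂ) : Matrix d d ℂ := matFun Real.exp A

/-!
For every `λ`, the variational bound `Tr[K ρ] ≤ D(ρ‖σ) + log Tr[e^K σ]` at `K = λ (L - ⟨L⟩_σ)`,
stability and sub-Gaussianity give `λ Δ ≤ γ + λ² α² / 2`, where `Δ` is the signed generalization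
error; this quadratic in `λ` has nonpositive discriminant, which is `Δ² ≤ 2 α² γ`.

Measuring `ρ` and `σ` in an eigenbasis of `K` reduces the variational bound to its classical version
and to the fact that a measurement does not increase the relative entropy. For the latter,
`D(ρ‖σ)` is the classical relative entropy of the Nussbaum–Szkoła weights of `ρ` and `σ`.
Since `log x = ∫ t in (0, ∞), 1 / (t + 1) - 1 / (t + x)`, and the total weight is preserved, it
suffices to compare `∑ P / (t + Q / P)` before and after the measurement for each `t > 0`.
Completing the square bounds the sum for the Nussbaum–Szkoła weights below by
`2 Re Tr[ρ X] - Tr[X σ Xᴴ] - t Tr[ρ X Xᴴ]` for every matrix `X`, and the best `X` that is diagonal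
in the measured basis turns this bound into the sum for the outcome weights.
-/

open Filter Topology

/-- The classical relative entropy (Kullback–Leibler divergence) of two weights on a finite type,
which need not be normalized. A term with `P i = 0` contributes `0`, as usual, but so does a term
with `P i ≠ 0 = Q i`, which is usually infinite. -/
noncomputable def relEnt {ι : Type*} [Fintype ι] (P Q : ι → ℝ) : ℝ :=
  ∑ i, P i * Real.log (P i / Q i)

section Classical

variable {ι κ : Type*} [Fintype ι] [Fintype κ]

lemma tendsto_sum_mul_log_add_atTop {w : ι → ℝ} (r : ι → ℝ) (hw : ∑ i, w i = 0) :
    Tendsto (fun t : ℝ => ∑ i, w i * Real.log (t + r i)) atTop (𝓝 0) := by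
  have h : Tendsto (fun t : ℝ => ∑ i, w i * (Real.log (t + r i) - Real.log t)) atTop
      (𝓝 (∑ i, w i * 0)) :=
    tendsto_finsetSum _ fun i _ => (Real.tendsto_log_comp_add_sub_log (r i)).const_mul (w i)
  simpa only [mul_sub, Finset.sum_sub_distrib, ← Finset.sum_mul, hw, zero_mul, sub_zero, mul_zero,
    Finset.sum_const_zero] using h

lemma hasDerivAt_sum_mul_log_add {w r : ι → ℝ} (hr : ∀ i, w i ≠ 0 → 0 < r i) {t : ℝ}
    (ht : 0 ≤ t) :
    HasDerivAt (fun s : ℝ => ∑ i, w i * Real.log (s + r i)) (∑ i, w i / (t + r i)) t := by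
  refine HasDerivAt.fun_sum fun i _ => ?_
  by_cases hi : w i = 0
  · simpa only [hi, zero_mul, zero_div] using hasDerivAt_const t (0 : ℝ)
  · have hne : t + r i ≠ 0 := (add_pos_of_nonneg_of_pos ht (hr i hi)).ne'
    simpa only [mul_one_div] using (((hasDerivAt_id' t).add_const (r i)).log hne).const_mul (w i)

lemma sum_mul_log_nonpos {w r : ι → ℝ} (hr : ∀ i, w i ≠ 0 → 0 < r i) (hw : ∑ i, w i = 0)
    (h : ∀ t : ℝ, 0 < t → 0 ≤ ∑ i, w i / (t + r i)) :
    ∑ i, w i * Real.log (r i) ≤ 0 := by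
  let F : ℝ → ℝ := fun t => ∑ i, w i * Real.log (t + r i)
  have hF {t : ℝ} (ht : 0 ≤ t) : HasDerivAt F (∑ i, w i / (t + r i)) t :=
    hasDerivAt_sum_mul_log_add hr ht
  have hmono : MonotoneOn F (Set.Ici 0) := by
    refine monotoneOn_of_hasDerivWithinAt_nonneg (convex_Ici 0)
      (fun t ht => (hF ht).continuousAt.continuousWithinAt)
      (fun t ht => (hF (interior_subset ht)).hasDerivWithinAt) fun t ht => h t ?_
    simpa only [interior_Ici, Set.mem_Ioi] using ht
  have hF0 : F 0 ≤ 0 := by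
    refine ge_of_tendsto (tendsto_sum_mul_log_add_atTop r hw) ?_
    filter_upwards [eventually_ge_atTop 0] with t ht
    exact hmono Set.self_mem_Ici ht ht
  simpa only [F, zero_add] using hF0

lemma relEnt_eq_neg_sum_mul_log_div (P Q : ι → ℝ) :
    relEnt P Q = -∑ i, P i * Real.log (Q i / P i) := by
  simp only [relEnt, ← Finset.sum_neg_distrib, ← mul_neg, ← Real.log_inv, inv_div]

lemma relEnt_le_relEnt_of_sum_div_le {P Q : ι → ℝ} {P' Q' : κ → ℝ}
    (hPQ : ∀ i, P i ≠ 0 → 0 < Q i / P i) (hPQ' : ∀ j, P' j ≠ 0 → 0 < Q' j / P' j)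
    (hsum : ∑ i, P i = ∑ j, P' j)
    (h : ∀ t : ℝ, 0 < t → ∑ i, P i / (t + Q i / P i) ≤ ∑ j, P' j / (t + Q' j / P' j)) :
    relEnt P Q ≤ relEnt P' Q' := by
  have key := sum_mul_log_nonpos (w := Sum.elim (fun i => -P i) P')
    (r := Sum.elim (fun i => Q i / P i) (fun j => Q' j / P' j))
    (by
      rintro (i | j) hw
      · exact hPQ i (neg_ne_zero.1 hw)
      · exact hPQ' j hw)
    (by simp [Fintype.sum_sum_type, hsum])
    (fun t ht => by simpa [Fintype.sum_sum_type, neg_div] using h t ht)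
  simp only [Fintype.sum_sum_type, Sum.elim_inl, Sum.elim_inr, neg_mul,
    Finset.sum_neg_distrib] at key
  rw [relEnt_eq_neg_sum_mul_log_div, relEnt_eq_neg_sum_mul_log_div]
  linarith

lemma sum_exp_mul_pos {Q : ι → ℝ} (hQ : ∀ i, 0 ≤ Q i) (hsum : ∑ i, Q i ≠ 0) (k : ι → ℝ) :
    0 < ∑ i, Real.exp (k i) * Q i := by
  obtain ⟨i, -, hi⟩ := Finset.exists_ne_zero_of_sum_ne_zero hsum
  exact Finset.sum_pos' (fun j _ => mul_nonneg (Real.exp_nonneg _) (hQ j))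
    ⟨i, Finset.mem_univ i, mul_pos (Real.exp_pos _) ((hQ i).lt_of_ne' hi)⟩

lemma sum_mul_le_relEnt_add_log_sum {P Q : ι → ℝ} (hP : ∀ i, 0 ≤ P i) (hQ : ∀ i, 0 ≤ Q i)
    (hPQ : ∀ i, Q i = 0 → P i = 0) (hsum : ∑ i, P i = 1) (k : ι → ℝ) :
    ∑ i, k i * P i ≤ relEnt P Q + Real.log (∑ i, Real.exp (k i) * Q i) := by
  set Z := ∑ i, Real.exp (k i) * Q i with hZ
  have hZpos : 0 < Z := by
    refine sum_exp_mul_pos hQ (fun hQ0 => one_ne_zero (hsum.symm.trans ?_)) k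
    have hQ0' := (Finset.sum_eq_zero_iff_of_nonneg fun i _ => hQ i).1 hQ0
    exact Finset.sum_eq_zero fun i hi => hPQ i (hQ0' i hi)
  have hterm (i : ι) :
      k i * P i - P i * Real.log (P i / Q i) - P i * Real.log Z ≤
        Real.exp (k i) * Q i / Z - P i := by
    rcases (hP i).eq_or_lt with hi | hi
    · have := hQ i
      simp only [← hi, mul_zero, zero_mul, sub_zero]
      positivity
    have hQi : 0 < Q i := (hQ i).lt_of_ne' fun h => hi.ne' (hPQ i h)
    calc k i * P i - P i * Real.log (P i / Q i) - P i * Real.log Z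
        = P i * Real.log (Real.exp (k i) * Q i / Z / P i) := by
          rw [Real.log_div (by positivity) hi.ne', Real.log_div (by positivity) hZpos.ne',
            Real.log_mul (Real.exp_ne_zero _) hQi.ne', Real.log_exp, Real.log_div hi.ne' hQi.ne']
          ring
      _ ≤ P i * (Real.exp (k i) * Q i / Z / P i - 1) := by
          gcongr
          exact Real.log_le_sub_one_of_pos (by positivity)
      _ = Real.exp (k i) * Q i / Z - P i := by field_simp
  have htotal := Finset.sum_le_sum fun i (_ : i ∈ Finset.univ) => hterm i
  simp only [Finset.sum_sub_distrib, ← Finset.sum_mul, ← Finset.sum_div, hsum, ← hZ,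
    div_self hZpos.ne', one_mul] at htotal
  rw [relEnt]
  linarith

end Classical

section Measurement

/-- The outcome weights of measuring the operator `A` in the orthonormal basis formed by the columns
of `W`: the real parts of the diagonal entries of `A` in that basis. -/
noncomputable def measuredWeight (W : unitaryGroup d ℂ) (A : Matrix d d ℂ) (i : d) : ℝ :=
  ((star (W : Matrix d d ℂ) * A * W) i i).re

/-- The observable `∑ x i • |wᵢ⟩⟨wᵢ|` taking the value `x i` on the `i`-th outcome of the
measurement in the basis `w` formed by the columns of `W`. -/
noncomputable def basisObservable (W : unitaryGroup d ℂ) (x : d → ℝ) : Matrix d d ℂ :=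
  W * diagonal (fun i => (x i : ℂ)) * star (W : Matrix d d ℂ)

lemma basisObservable_one (W : unitaryGroup d ℂ) : basisObservable W 1 = 1 := by
  simp [basisObservable]

lemma conjTranspose_basisObservable (W : unitaryGroup d ℂ) (x : d → ℝ) :
    (basisObservable W x)ᴴ = basisObservable W x := by
  simp [basisObservable, star_eq_conjTranspose, Matrix.mul_assoc, diagonal_conjTranspose,
    Pi.star_def]

lemma basisObservable_mul_basisObservable (W : unitaryGroup d ℂ) (x y : d → ℝ) :
    basisObservable W x * basisObservable W y = basisObservable W (x * y) := by
  have hWW : star (W : Matrix d d ℂ) * W = 1 := Unitary.coe_star_mul_self W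
  calc basisObservable W x * basisObservable W y
      = W * diagonal (fun i => (x i : ℂ)) * (star (W : Matrix d d ℂ) * W) *
          diagonal (fun i => (y i : ℂ)) * star (W : Matrix d d ℂ) := by
        simp only [basisObservable, Matrix.mul_assoc]
    _ = basisObservable W (x * y) := by
        rw [hWW, Matrix.mul_one, Matrix.mul_assoc (W : Matrix d d ℂ), diagonal_mul_diagonal]
        simp only [basisObservable, Pi.mul_apply, Complex.ofReal_mul]

lemma re_trace_basisObservable_mul (W : unitaryGroup d ℂ) (x : d → ℝ) (A : Matrix d d ℂ) :
    (trace (basisObservable W x * A)).re = ∑ i, x i * measuredWeight W A i := by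
  rw [basisObservable, Matrix.mul_assoc, Matrix.mul_assoc, trace_mul_comm, Matrix.mul_assoc, trace,
    Complex.re_sum]
  simp only [diag_apply, diagonal_mul, Complex.re_ofReal_mul, measuredWeight]

lemma sum_measuredWeight (W : unitaryGroup d ℂ) (A : Matrix d d ℂ) :
    ∑ i, measuredWeight W A i = (trace A).re := by
  simpa [basisObservable_one] using (re_trace_basisObservable_mul W 1 A).symm

lemma conjTranspose_mul_mul_apply_self {m n R : Type*} [Fintype m] [NonUnitalSemiring R] [Star R]
    (W : Matrix m n R) (A : Matrix m m R) (i : n) :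
    (Wᴴ * A * W) i i = star (W.col i) ⬝ᵥ A *ᵥ W.col i := by
  rw [Matrix.mul_assoc]
  rfl

lemma measuredWeight_nonneg {A : Matrix d d ℂ} (hA : A.PosSemidef) (W : unitaryGroup d ℂ) (i : d) :
    0 ≤ measuredWeight W A i := by
  rw [measuredWeight, star_eq_conjTranspose, conjTranspose_mul_mul_apply_self]
  exact hA.re_dotProduct_nonneg _

lemma SuppLE.measuredWeight_eq_zero {ρ σ : Matrix d d ℂ} (h : SuppLE ρ σ) (hσ : σ.PosSemidef)
    (W : unitaryGroup d ℂ) {i : d} (hi : measuredWeight W σ i = 0) :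
    measuredWeight W ρ i = 0 := by
  rw [measuredWeight, star_eq_conjTranspose, conjTranspose_mul_mul_apply_self] at hi ⊢
  have hquad : star ((W : Matrix d d ℂ).col i) ⬝ᵥ σ *ᵥ (W : Matrix d d ℂ).col i = 0 :=
    Complex.ext hi (Complex.nonneg_iff.1 (hσ.dotProduct_mulVec_nonneg _)).2.symm
  rw [h _ ((hσ.dotProduct_mulVec_zero_iff _).1 hquad), dotProduct_zero, Complex.zero_re]

end Measurement

section SpectralCalculus

variable {A B : Matrix d d ℂ}

lemma matFun_eq_basisObservable (hA : A.IsHermitian) (f : ℝ → ℝ) :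
    matFun f A = basisObservable hA.eigenvectorUnitary (f ∘ hA.eigenvalues) :=
  dif_pos hA

lemma matFun_id (hA : A.IsHermitian) : matFun id A = A :=
  (matFun_eq_basisObservable hA id).trans hA.spectral_theorem.symm

lemma matFun_one (hA : A.IsHermitian) : matFun 1 A = 1 :=
  (matFun_eq_basisObservable hA 1).trans (basisObservable_one _)

lemma matFun_mul_matFun (hA : A.IsHermitian) (f g : ℝ → ℝ) :
    matFun f A * matFun g A = matFun (f * g) A := by
  simp only [matFun_eq_basisObservable hA, basisObservable_mul_basisObservable, Pi.mul_comp]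

lemma re_trace_matFun_mul (hA : A.IsHermitian) (f : ℝ → ℝ) (X : Matrix d d ℂ) :
    (trace (matFun f A * X)).re =
      ∑ i, f (hA.eigenvalues i) * measuredWeight hA.eigenvectorUnitary X i := by
  rw [matFun_eq_basisObservable hA, re_trace_basisObservable_mul]
  rfl

/-- The matrix entries `⟪uₐ, X v_b⟫` of `X` between the eigenbasis `u` of `A` and the eigenbasis
`v` of `B`. -/
noncomputable def eigenEntry (hA : A.IsHermitian) (hB : B.IsHermitian) (X : Matrix d d ℂ) :
    Matrix d d ℂ :=
  star (hA.eigenvectorUnitary : Matrix d d ℂ) * X * hB.eigenvectorUnitary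

lemma trace_diagonal_mul_mul_diagonal_mul_conjTranspose {m n R : Type*} [Fintype m] [Fintype n]
    [DecidableEq m] [DecidableEq n] [CommSemiring R] [StarRing R] (f : m → R) (g : n → R)
    (X Y : Matrix m n R) :
    trace (diagonal f * X * diagonal g * Yᴴ) = ∑ a, ∑ b, f a * g b * (X a b * star (Y a b)) := by
  simp only [trace, diag_apply, mul_apply (N := Yᴴ), mul_diagonal, diagonal_mul,
    conjTranspose_apply]
  exact Finset.sum_congr rfl fun a _ => Finset.sum_congr rfl fun b _ => by ring

lemma trace_matFun_mul_mul_matFun_mul_conjTranspose (hA : A.IsHermitian) (hB : B.IsHermitian)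
    (f g : ℝ → ℝ) (X Y : Matrix d d ℂ) :
    trace (matFun f A * X * matFun g B * Yᴴ) =
      ∑ a, ∑ b, (f (hA.eigenvalues a) : ℂ) * g (hB.eigenvalues b) *
        (eigenEntry hA hB X a b * star (eigenEntry hA hB Y a b)) := by
  rw [← trace_diagonal_mul_mul_diagonal_mul_conjTranspose,
    matFun_eq_basisObservable hA, matFun_eq_basisObservable hB, basisObservable, Matrix.mul_assoc,
    Matrix.mul_assoc, Matrix.mul_assoc, Matrix.mul_assoc, trace_mul_comm]
  simp only [basisObservable, Function.comp_apply, eigenEntry, star_eq_conjTranspose,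
    conjTranspose_mul, conjTranspose_conjTranspose, Matrix.mul_assoc]

lemma re_trace_matFun_mul_mul_matFun_mul_conjTranspose_self (hA : A.IsHermitian)
    (hB : B.IsHermitian) (f g : ℝ → ℝ) (X : Matrix d d ℂ) :
    (trace (matFun f A * X * matFun g B * Xᴴ)).re =
      ∑ a, ∑ b, f (hA.eigenvalues a) * g (hB.eigenvalues b) * ‖eigenEntry hA hB X a b‖ ^ 2 := by
  rw [trace_matFun_mul_mul_matFun_mul_conjTranspose hA hB]
  simp only [Complex.star_def, Complex.mul_conj', ← Complex.ofReal_mul, ← Complex.ofReal_pow,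
    ← Complex.ofReal_sum, Complex.ofReal_re]

lemma re_trace_matFun_mul_matFun (hA : A.IsHermitian) (hB : B.IsHermitian) (f g : ℝ → ℝ) :
    (trace (matFun f A * matFun g B)).re =
      ∑ a, ∑ b, f (hA.eigenvalues a) * g (hB.eigenvalues b) * ‖eigenEntry hA hB 1 a b‖ ^ 2 := by
  simpa using re_trace_matFun_mul_mul_matFun_mul_conjTranspose_self hA hB f g 1

end SpectralCalculus

section NussbaumSzkola

variable {ρ σ : Matrix d d ℂ}

/-- The first Nussbaum–Szkoła weight `pₐ |⟪uₐ, v_b⟫|²` of `ρ = ∑ pₐ |uₐ⟩⟨uₐ|` and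
`σ = ∑ q_b |v_b⟩⟨v_b|`. -/
noncomputable def nsLeft (hρ : ρ.IsHermitian) (hσ : σ.IsHermitian) (ab : d × d) : ℝ :=
  hρ.eigenvalues ab.1 * ‖eigenEntry hρ hσ 1 ab.1 ab.2‖ ^ 2

/-- The second Nussbaum–Szkoła weight `q_b |⟪uₐ, v_b⟫|²`, with the notation of `nsLeft`. The
classical relative entropy of the pair is the quantum relative entropy of `ρ` and `σ`. -/
noncomputable def nsRight (hρ : ρ.IsHermitian) (hσ : σ.IsHermitian) (ab : d × d) : ℝ :=
  hσ.eigenvalues ab.2 * ‖eigenEntry hρ hσ 1 ab.1 ab.2‖ ^ 2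

lemma sum_nsLeft (hρ : ρ.IsHermitian) (hσ : σ.IsHermitian) :
    ∑ ab, nsLeft hρ hσ ab = (trace ρ).re := by
  simpa [nsLeft, Fintype.sum_prod_type, matFun_id hρ, matFun_one hσ] using
    (re_trace_matFun_mul_matFun hρ hσ id 1).symm

lemma SuppLE.eigenvalues_mul_eigenEntry_one_eq_zero (h : SuppLE ρ σ) (hρ : ρ.IsHermitian)
    (hσ : σ.IsHermitian) (a : d) {b : d} (hb : hσ.eigenvalues b = 0) :
    (hρ.eigenvalues a : ℂ) * eigenEntry hρ hσ 1 a b = 0 := by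
  set U : Matrix d d ℂ := ↑hρ.eigenvectorUnitary with hU
  set V : Matrix d d ℂ := ↑hσ.eigenvectorUnitary
  have hσV : σ *ᵥ V.col b = 0 := by
    have := hσ.mulVec_eigenvectorBasis b
    rw [hb, zero_smul] at this
    exact this
  have hUρ : star U * ρ = diagonal (fun i => (hρ.eigenvalues i : ℂ)) * star U := by
    conv_lhs => rw [← matFun_id hρ, matFun_eq_basisObservable hρ, basisObservable]
    simp [hU, ← Matrix.mul_assoc]
  have hentry : (star U * ρ * V) a b = 0 := by
    rw [Matrix.mul_assoc]
    change (star U *ᵥ (ρ *ᵥ V.col b)) a = 0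
    rw [h _ hσV, mulVec_zero, Pi.zero_apply]
  rwa [hUρ, Matrix.mul_assoc, diagonal_mul, ← Matrix.mul_one (star U)] at hentry

lemma nsRight_div_nsLeft_pos (hρ : ρ.PosSemidef) (hσ : σ.PosSemidef) (h : SuppLE ρ σ) {ab : d × d}
    (hab : nsLeft hρ.isHermitian hσ.isHermitian ab ≠ 0) :
    0 < nsRight hρ.isHermitian hσ.isHermitian ab / nsLeft hρ.isHermitian hσ.isHermitian ab := by
  have hp := left_ne_zero_of_mul hab
  have hE : eigenEntry hρ.isHermitian hσ.isHermitian 1 ab.1 ab.2 ≠ 0 := fun h0 =>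
    right_ne_zero_of_mul hab (by simp [h0])
  have hq : hσ.isHermitian.eigenvalues ab.2 ≠ 0 := fun hq =>
    mul_ne_zero (Complex.ofReal_ne_zero.2 hp) hE
      (h.eigenvalues_mul_eigenEntry_one_eq_zero hρ.isHermitian hσ.isHermitian ab.1 hq)
  have hp' := (hρ.eigenvalues_nonneg ab.1).lt_of_ne' hp
  have hq' := (hσ.eigenvalues_nonneg ab.2).lt_of_ne' hq
  rw [nsLeft, nsRight]
  positivity

lemma qRelEnt_eq_relEnt (hρ : ρ.PosSemidef) (hσ : σ.PosSemidef) (h : SuppLE ρ σ) :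
    qRelEnt ρ σ =
      relEnt (nsLeft hρ.isHermitian hσ.isHermitian) (nsRight hρ.isHermitian hσ.isHermitian) := by
  have hρ' := hρ.isHermitian
  have hσ' := hσ.isHermitian
  have hself : (trace (ρ * mlog ρ)).re =
      ∑ a, ∑ b, hρ'.eigenvalues a * Real.log (hρ'.eigenvalues a) *
        ‖eigenEntry hρ' hσ' 1 a b‖ ^ 2 := by
    have := re_trace_matFun_mul_matFun hρ' hσ' (id * Real.log) 1
    simpa [mlog, ← matFun_mul_matFun hρ', matFun_id hρ', matFun_one hσ'] using this
  have hcross : (trace (ρ * mlog σ)).re =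
      ∑ a, ∑ b, hρ'.eigenvalues a * Real.log (hσ'.eigenvalues b) *
        ‖eigenEntry hρ' hσ' 1 a b‖ ^ 2 := by
    simpa [mlog, matFun_id hρ'] using re_trace_matFun_mul_matFun hρ' hσ' id Real.log
  rw [qRelEnt, Matrix.mul_sub, trace_sub, Complex.sub_re, hself, hcross, relEnt,
    Fintype.sum_prod_type, ← Finset.sum_sub_distrib]
  refine Finset.sum_congr rfl fun a _ => ?_
  rw [← Finset.sum_sub_distrib]
  refine Finset.sum_congr rfl fun b _ => ?_
  by_cases hM : nsLeft hρ' hσ' (a, b) = 0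
  · have hM' : hρ'.eigenvalues a * ‖eigenEntry hρ' hσ' 1 a b‖ ^ 2 = 0 := hM
    rw [hM]
    linear_combination (Real.log (hρ'.eigenvalues a) - Real.log (hσ'.eigenvalues b)) * hM'
  · have hN : nsRight hρ' hσ' (a, b) ≠ 0 := fun hN =>
      (nsRight_div_nsLeft_pos hρ hσ h hM).ne' (by rw [hN, zero_div])
    rw [nsLeft, nsRight, mul_div_mul_right _ _ (right_ne_zero_of_mul hM),
      Real.log_div (left_ne_zero_of_mul hM) (left_ne_zero_of_mul hN)]
    ring

end NussbaumSzkola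

section DataProcessing

lemma two_mul_re_inner_sub_le {𝕜 E : Type*} [RCLike 𝕜] [NormedAddCommGroup E]
    [InnerProductSpace 𝕜 E] (u x : E) {c : ℝ} (hc : 0 < c) :
    2 * RCLike.re (inner 𝕜 u x) - c * ‖x‖ ^ 2 ≤ ‖u‖ ^ 2 / c := by
  have h := norm_sub_sq (𝕜 := 𝕜) u ((c : 𝕜) • x)
  rw [inner_smul_right, RCLike.re_ofReal_mul, norm_smul, RCLike.norm_ofReal, mul_pow, sq_abs] at h
  rw [le_div_iff₀ hc]
  nlinarith [sq_nonneg ‖u - (c : 𝕜) • x‖]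

lemma two_mul_mul_re_inner_sub_le {𝕜 E : Type*} [RCLike 𝕜] [NormedAddCommGroup E]
    [InnerProductSpace 𝕜 E] (u x : E) {p q t : ℝ} (hp : 0 ≤ p) (hq : 0 ≤ q) (ht : 0 < t) :
    2 * (p * RCLike.re (inner 𝕜 u x)) - q * ‖x‖ ^ 2 - t * (p * ‖x‖ ^ 2) ≤
      p * ‖u‖ ^ 2 / (t + q / p) := by
  rcases hp.eq_or_lt with rfl | hp
  · have : 0 ≤ q * ‖x‖ ^ 2 := by positivity
    simpa using this
  calc 2 * (p * RCLike.re (inner 𝕜 u x)) - q * ‖x‖ ^ 2 - t * (p * ‖x‖ ^ 2)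
      = p * (2 * RCLike.re (inner 𝕜 u x) - (t + q / p) * ‖x‖ ^ 2) := by
        field_simp
        ring
    _ ≤ p * (‖u‖ ^ 2 / (t + q / p)) := by
        gcongr
        exact two_mul_re_inner_sub_le u x (by positivity)
    _ = p * ‖u‖ ^ 2 / (t + q / p) := (mul_div_assoc _ _ _).symm

variable {ρ σ : Matrix d d ℂ}

lemma nsLeft_div_add_nsRight_div_nsLeft (hρ : ρ.IsHermitian) (hσ : σ.IsHermitian) (t : ℝ)
    (a b : d) :
    nsLeft hρ hσ (a, b) / (t + nsRight hρ hσ (a, b) / nsLeft hρ hσ (a, b)) =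
      nsLeft hρ hσ (a, b) / (t + hσ.eigenvalues b / hρ.eigenvalues a) := by
  by_cases hE : ‖eigenEntry hρ hσ 1 a b‖ ^ 2 = 0
  · simp only [nsLeft, hE, mul_zero, zero_div]
  · simp only [nsLeft, nsRight, mul_div_mul_right _ _ hE]

lemma two_mul_re_trace_mul_sub_le (hρ : ρ.PosSemidef) (hσ : σ.PosSemidef) (X : Matrix d d ℂ)
    {t : ℝ} (ht : 0 < t) :
    2 * (trace (ρ * X)).re - (trace (X * σ * Xᴴ)).re - t * (trace (ρ * X * Xᴴ)).re ≤
      ∑ ab, nsLeft hρ.isHermitian hσ.isHermitian ab /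
        (t + nsRight hρ.isHermitian hσ.isHermitian ab /
          nsLeft hρ.isHermitian hσ.isHermitian ab) := by
  have hρ' := hρ.isHermitian
  have hσ' := hσ.isHermitian
  set p := hρ'.eigenvalues
  set q := hσ'.eigenvalues
  set E := eigenEntry hρ' hσ'
  have hcross : (trace (ρ * X)).re = ∑ a, ∑ b, p a * (inner ℂ (E 1 a b) (E X a b)).re := by
    have h := trace_matFun_mul_mul_matFun_mul_conjTranspose hρ' hσ' id 1 X 1
    simp only [matFun_id hρ', matFun_one hσ', conjTranspose_one, id_eq,
      Pi.one_apply, Complex.ofReal_one, mul_one] at h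
    rw [h]
    simp only [Complex.re_sum, Complex.re_ofReal_mul, RCLike.inner_apply, starRingEnd_apply, p, E]
  have hright : (trace (X * σ * Xᴴ)).re = ∑ a, ∑ b, q b * ‖E X a b‖ ^ 2 := by
    simpa [matFun_id hσ', matFun_one hρ'] using
      re_trace_matFun_mul_mul_matFun_mul_conjTranspose_self hρ' hσ' 1 id X
  have hleft : (trace (ρ * X * Xᴴ)).re = ∑ a, ∑ b, p a * ‖E X a b‖ ^ 2 := by
    simpa [matFun_id hρ', matFun_one hσ'] using
      re_trace_matFun_mul_mul_matFun_mul_conjTranspose_self hρ' hσ' id 1 X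
  rw [hcross, hright, hleft, Fintype.sum_prod_type]
  simp only [Finset.mul_sum, ← Finset.sum_sub_distrib]
  refine Finset.sum_le_sum fun a _ => Finset.sum_le_sum fun b _ => ?_
  rw [nsLeft_div_add_nsRight_div_nsLeft]
  exact two_mul_mul_re_inner_sub_le (𝕜 := ℂ) (E 1 a b) (E X a b)
    (hρ.eigenvalues_nonneg a) (hσ.eigenvalues_nonneg b) ht

lemma two_mul_sub_sq_mul_eq_div {P Q t : ℝ} (hP : 0 ≤ P) (hQ : 0 ≤ Q) (ht : 0 < t) :
    2 * (P / (Q + t * P) * P) - (P / (Q + t * P)) ^ 2 * Q - t * ((P / (Q + t * P)) ^ 2 * P) =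
      P / (t + Q / P) := by
  rcases hP.eq_or_lt with rfl | hP
  · simp
  · field_simp
    ring

lemma sum_measuredWeight_div_le (hρ : ρ.PosSemidef) (hσ : σ.PosSemidef) (W : unitaryGroup d ℂ)
    {t : ℝ} (ht : 0 < t) :
    ∑ i, measuredWeight W ρ i / (t + measuredWeight W σ i / measuredWeight W ρ i) ≤
      ∑ ab, nsLeft hρ.isHermitian hσ.isHermitian ab /
        (t + nsRight hρ.isHermitian hσ.isHermitian ab /
          nsLeft hρ.isHermitian hσ.isHermitian ab) := by
  set P := measuredWeight W ρ
  set Q := measuredWeight W σ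
  -- `x i` is the maximum point of the quadratic `2 x P i - (Q i + t P i) x²`.
  let x : d → ℝ := fun i => P i / (Q i + t * P i)
  let X := basisObservable W x
  refine le_of_eq_of_le ?_ (two_mul_re_trace_mul_sub_le hρ hσ X ht)
  have hcross : (trace (ρ * X)).re = ∑ i, x i * P i := by
    rw [trace_mul_comm, re_trace_basisObservable_mul]
  have hright : (trace (X * σ * Xᴴ)).re = ∑ i, x i ^ 2 * Q i := by
    rw [conjTranspose_basisObservable, trace_mul_comm, ← Matrix.mul_assoc,
      basisObservable_mul_basisObservable, ← pow_two, re_trace_basisObservable_mul]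
    rfl
  have hleft : (trace (ρ * X * Xᴴ)).re = ∑ i, x i ^ 2 * P i := by
    rw [conjTranspose_basisObservable, Matrix.mul_assoc, trace_mul_comm,
      basisObservable_mul_basisObservable, ← pow_two, re_trace_basisObservable_mul]
    rfl
  rw [hcross, hright, hleft, Finset.mul_sum, Finset.mul_sum, ← Finset.sum_sub_distrib,
    ← Finset.sum_sub_distrib]
  exact Finset.sum_congr rfl fun i _ => (two_mul_sub_sq_mul_eq_div
    (measuredWeight_nonneg hρ W i) (measuredWeight_nonneg hσ W i) ht).symm

theorem relEnt_measuredWeight_le_qRelEnt (hρ : ρ.PosSemidef) (hσ : σ.PosSemidef)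
    (h : SuppLE ρ σ) (W : unitaryGroup d ℂ) :
    relEnt (measuredWeight W ρ) (measuredWeight W σ) ≤ qRelEnt ρ σ := by
  rw [qRelEnt_eq_relEnt hρ hσ h]
  refine relEnt_le_relEnt_of_sum_div_le (fun i hi => ?_)
    (fun ab => nsRight_div_nsLeft_pos hρ hσ h)
    ((sum_measuredWeight W ρ).trans (sum_nsLeft hρ.isHermitian hσ.isHermitian).symm)
    (fun t => sum_measuredWeight_div_le hρ hσ W)
  exact div_pos ((measuredWeight_nonneg hσ W i).lt_of_ne' (mt (h.measuredWeight_eq_zero hσ W) hi))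
    ((measuredWeight_nonneg hρ W i).lt_of_ne' hi)

end DataProcessing

section Variational

variable {ρ σ : Matrix d d ℂ}

theorem re_trace_mul_le_qRelEnt_add_log (hρ : IsDensity ρ) (hσ : σ.PosSemidef)
    (h : SuppLE ρ σ) {K : Matrix d d ℂ} (hK : K.IsHermitian) :
    (trace (K * ρ)).re ≤ qRelEnt ρ σ + Real.log (trace (mexp K * σ)).re := by
  let W := hK.eigenvectorUnitary
  have hKρ : (trace (K * ρ)).re = ∑ i, hK.eigenvalues i * measuredWeight W ρ i := by
    simpa [matFun_id hK] using re_trace_matFun_mul hK id ρ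
  rw [hKρ, mexp, re_trace_matFun_mul hK]
  have hsum : ∑ i, measuredWeight W ρ i = 1 := by
    rw [sum_measuredWeight, hρ.2, Complex.one_re]
  refine (sum_mul_le_relEnt_add_log_sum (measuredWeight_nonneg hρ.1 W) (measuredWeight_nonneg hσ W)
    (fun i => h.measuredWeight_eq_zero hσ W) hsum hK.eigenvalues).trans ?_
  gcongr
  exact relEnt_measuredWeight_le_qRelEnt hρ.1 hσ h W

lemma re_trace_mexp_mul_pos (hσ : IsDensity σ) {K : Matrix d d ℂ} (hK : K.IsHermitian) :
    0 < (trace (mexp K * σ)).re := by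
  rw [mexp, re_trace_matFun_mul hK]
  refine sum_exp_mul_pos (measuredWeight_nonneg hσ.1 _) ?_ _
  rw [sum_measuredWeight, hσ.2, Complex.one_re]
  exact one_ne_zero

end Variational

section SubGaussian

lemma isHermitian_smul_sub_smul_one {n : Type*} [DecidableEq n] {L : Matrix n n ℂ}
    (hL : L.IsHermitian) (lam c : ℝ) : (lam • (L - c • (1 : Matrix n n ℂ))).IsHermitian :=
  (hL.sub (isHermitian_one.smul (.all c))).smul (.all lam)

lemma re_trace_smul_sub_smul_one_mul {ρ : Matrix d d ℂ} (hρ : trace ρ = 1) (L : Matrix d d ℂ)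
    (lam c : ℝ) :
    (trace (lam • (L - c • (1 : Matrix d d ℂ)) * ρ)).re = lam * ((trace (L * ρ)).re - c) := by
  simp [sub_mul, hρ]

lemma abs_le_sqrt_of_forall_mul_le_add_sq {x α γ : ℝ}
    (h : ∀ lam : ℝ, lam * x ≤ γ + lam ^ 2 * α ^ 2 / 2) : |x| ≤ √(2 * α ^ 2 * γ) := by
  have hdiscrim : discrim (α ^ 2 / 2) (-x) γ ≤ 0 :=
    discrim_le_zero fun lam => by linarith [h lam]
  rw [discrim] at hdiscrim
  exact Real.abs_le_sqrt (by linarith)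

end SubGaussian

/-- If a quantum learning algorithm is `γ`-stable, i.e. the mutual
information `I[S𝔗e;WB'] = D(σ_joint ‖ σ_prod)` between the data and the output is at most
`γ`, and the global loss observable `L` is classical-quantum `α`-sub-Gaussian with respect
to the product of the marginals `σ_prod`, then the expected generalization error
`|Tr[L σ_joint] − Tr[L σ_prod]|` is at most `√(2 α² γ)`. -/
theorem stability_implies_generalization
    (σjoint σprod L : Matrix d d ℂ) (α γ : ℝ) (hα : 0 < α) (hγ : 0 ≤ γ)
    (hjoint : IsDensity σjoint) (hprod : IsDensity σprod)
    (hsupp : SuppLE σjoint σprod)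
    (hL : L.IsHermitian)
    -- `γ`-stability: the mutual information is at most `γ`
    (hstable : qRelEnt σjoint σprod ≤ γ)
    -- classical-quantum `α`-sub-Gaussianity of the loss w.r.t. the product of marginals
    (hSG : ∀ lam : ℝ,
      (Matrix.trace (mexp (lam • (L - (Matrix.trace (L * σprod)).re • (1 : Matrix d d ℂ)))
          * σprod)).re ≤ Real.exp (lam ^ 2 * α ^ 2 / 2)) :
    |(Matrix.trace (L * σjoint)).re - (Matrix.trace (L * σprod)).re| ≤
      Real.sqrt (2 * α ^ 2 * γ) := by
  refine abs_le_sqrt_of_forall_mul_le_add_sq fun lam => ?_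
  set c := (Matrix.trace (L * σprod)).re
  have hK := isHermitian_smul_sub_smul_one hL lam c
  calc lam * ((Matrix.trace (L * σjoint)).re - c)
      = (Matrix.trace (lam • (L - c • (1 : Matrix d d ℂ)) * σjoint)).re :=
        (re_trace_smul_sub_smul_one_mul hjoint.2 L lam c).symm
    _ ≤ qRelEnt σjoint σprod +
          Real.log (Matrix.trace (mexp (lam • (L - c • (1 : Matrix d d ℂ))) * σprod)).re :=
        re_trace_mul_le_qRelEnt_add_log hjoint hprod.1 hsupp hK
    _ ≤ γ + lam ^ 2 * α ^ 2 / 2 :=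
        add_le_add hstable <|
          (Real.log_le_iff_le_exp (re_trace_mexp_mul_pos hprod hK)).2 (hSG lam)
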